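/- There exist constants C₆ > 0 and C₇ > 0 depending only on α, L_x and L_y (not on h, m, n) such that for every periodic grid function φ: F(φ) ≥ C₆·‖φ‖_∞² − (L_x·L_y)/4 and F(φ) ≥ C₇·‖∇_hφ‖₄² − (L_x·L_y)/4. -/

import Mathlib

open Finset

noncomputable section

/-- Periodic grid functions on an `m × n` grid (indices taken modulo `m` and `n`). -/
abbrev Grid (m n : ℕ) := ZMod m × ZMod n → ℝ

/-- Forward difference in the `x` direction. -/
def Dx {m n : ℕ} (h : ℝ) (φ : Grid m n) : Grid m n :=
  fun p => (φ (p.1 + 1, p.2) - φ p) / h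

/-- Forward difference in the `y` direction. -/
def Dy {m n : ℕ} (h : ℝ) (φ : Grid m n) : Grid m n :=
  fun p => (φ (p.1, p.2 + 1) - φ p) / h

/-- The five-point discrete Laplacian. -/
def lapH {m n : ℕ} (h : ℝ) (φ : Grid m n) : Grid m n :=
  fun p => (φ (p.1 + 1, p.2) + φ (p.1 - 1, p.2) + φ (p.1, p.2 + 1) + φ (p.1, p.2 - 1)
    - 4 * φ p) / h ^ 2

/-- Discrete `L²` norm. -/
def norm2 {m n : ℕ} [NeZero m] [NeZero n] (h : ℝ) (φ : Grid m n) : ℝ :=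
  Real.sqrt (h ^ 2 * ∑ p : ZMod m × ZMod n, φ p ^ 2)

/-- Discrete `L²` norm of the gradient. -/
def gradNorm2 {m n : ℕ} [NeZero m] [NeZero n] (h : ℝ) (φ : Grid m n) : ℝ :=
  Real.sqrt (h ^ 2 * ∑ p : ZMod m × ZMod n, (Dx h φ p ^ 2 + Dy h φ p ^ 2))

/-- Discrete `L⁴` norm. -/
def norm4 {m n : ℕ} [NeZero m] [NeZero n] (h : ℝ) (φ : Grid m n) : ℝ :=
  (h ^ 2 * ∑ p : ZMod m × ZMod n, φ p ^ 4) ^ ((1 : ℝ) / 4)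

/-- Discrete `L⁴` norm of the gradient. -/
def gradNorm4 {m n : ℕ} [NeZero m] [NeZero n] (h : ℝ) (φ : Grid m n) : ℝ :=
  (h ^ 2 * ∑ p : ZMod m × ZMod n, (Dx h φ p ^ 4 + Dy h φ p ^ 4)) ^ ((1 : ℝ) / 4)

/-- Discrete `L^∞` norm. -/
def normInf {m n : ℕ} [NeZero m] [NeZero n] (φ : Grid m n) : ℝ :=
  ⨆ p : ZMod m × ZMod n, |φ p|

/-- The discrete MPFC energy
`F(φ) = ¼‖φ‖₄⁴ + (α/2)‖φ‖₂² − ‖∇ₕφ‖₂² + ½‖Δₕφ‖₂²`. -/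
def energyF {m n : ℕ} [NeZero m] [NeZero n] (α h : ℝ) (φ : Grid m n) : ℝ :=
  1 / 4 * norm4 h φ ^ 4 + α / 2 * norm2 h φ ^ 2 - gradNorm2 h φ ^ 2
    + 1 / 2 * norm2 h (lapH h φ) ^ 2

/-!
Write `H = ‖φ‖₂² + ‖∇ₕφ‖₂² + ‖Δₕφ‖₂²`.

Since `t⁴ ≥ 2t² − 1`, the quartic term of the energy dominates `½‖φ‖₂² − LxLy/4`. What remains is
a quadratic form in `‖φ‖₂` and `‖Δₕφ‖₂` once `‖∇ₕφ‖₂² ≤ ‖φ‖₂‖Δₕφ‖₂` is used, and the term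
`(α/2)‖φ‖₂²` makes it positive definite. Hence `F(φ) ≥ c H − LxLy/4` with `c` depending only on `α`.

Both norms are controlled by `H` through the one-dimensional Sobolev inequality
`u(i)² ≤ (1/L + 1)‖u‖²_{H¹}` on a cycle of length `L`. Applying it in `x` and then in `y` bounds
`φ(p)²`, while multiplying the `x` and the `y` bound of `g(p)²` and summing gives a Ladyzhenskaya
inequality for `‖g‖₄⁴`, which is used for `g = D_xφ` and `g = D_yφ`. The second differences that
appear are bounded by `Δₕφ` because summation by parts gives
`‖Δₕφ‖₂² = ‖D_xD_xφ‖₂² + 2‖D_yD_xφ‖₂² + ‖D_yD_yφ‖₂²`.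
-/

open scoped fwdDiff BigOperators

lemma abs_sq_sub_sq_le {h : ℝ} (hh : 0 < h) (a b : ℝ) :
    |a ^ 2 - b ^ 2| ≤ h * ((a ^ 2 + b ^ 2) / 2 + ((a - b) / h) ^ 2) := by
  have factor : a ^ 2 - b ^ 2 = h * ((a + b) * ((a - b) / h)) := by field_simp; ring
  rw [factor, abs_mul, abs_of_pos hh]
  gcongr
  set d := (a - b) / h
  exact abs_le.2 ⟨by linarith [sq_nonneg ((a + b) / 2 + d), sq_nonneg (a - b)],
    by linarith [sq_nonneg ((a + b) / 2 - d), sq_nonneg (a - b)]⟩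

lemma mul_add_mul_le_sq {a b c d H : ℝ} (ha : 0 ≤ a) (hb : 0 ≤ b) (hc : 0 ≤ c) (hd : 0 ≤ d)
    (hac : a + c ≤ H) (hbd : b + d ≤ H) : a * b + c * d ≤ H ^ 2 :=
  calc a * b + c * d ≤ (a + c) * (b + d) := by linarith [mul_nonneg ha hd, mul_nonneg hc hb]
    _ ≤ H * H := by gcongr; linarith
    _ = H ^ 2 := (sq H).symm

lemma fwdDiff_comm {M A : Type*} [AddCommMonoid M] [AddCommGroup A] (d e : M) (f : M → A) :
    Δ_[d] (Δ_[e] f) = Δ_[e] (Δ_[d] f) := by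
  ext p
  simp only [fwdDiff, add_right_comm p d e]
  abel

section FiniteGroup

variable {G R : Type*} [AddCommGroup G] [Fintype G]

lemma sum_fwdDiff_mul [CommRing R] (e : G) (f g : G → R) :
    ∑ p, Δ_[e] f p * g p = ∑ p, f p * Δ_[-e] g p := by
  have shift : ∑ p, f (p + e) * g p = ∑ p, f p * g (p + -e) := by
    simpa using Equiv.sum_comp (Equiv.addRight e) fun p ↦ f p * g (p + -e)
  simp only [fwdDiff, sub_mul, mul_sub, sum_sub_distrib, shift]

lemma sum_mul_fwdDiff_neg_fwdDiff [CommRing R] (e : G) (f : G → R) :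
    ∑ p, f p * Δ_[-e] (Δ_[e] f) p = ∑ p, Δ_[e] f p ^ 2 := by
  simp only [← sum_fwdDiff_mul, sq]

lemma sum_fwdDiff_neg_fwdDiff_mul_fwdDiff_neg_fwdDiff [CommRing R] (d e : G) (f : G → R) :
    ∑ p, Δ_[-d] (Δ_[d] f) p * Δ_[-e] (Δ_[e] f) p = ∑ p, Δ_[e] (Δ_[d] f) p ^ 2 := by
  calc ∑ p, Δ_[-d] (Δ_[d] f) p * Δ_[-e] (Δ_[e] f) p
      = ∑ p, Δ_[e] f p * Δ_[-d] (Δ_[d] (Δ_[e] f)) p := by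
        rw [← sum_fwdDiff_mul, fwdDiff_comm e (-d), fwdDiff_comm e d]
        simp only [mul_comm]
    _ = ∑ p, Δ_[e] (Δ_[d] f) p ^ 2 := by
        rw [sum_mul_fwdDiff_neg_fwdDiff, fwdDiff_comm d e]

lemma sum_abs_fwdDiff_sq_le {h : ℝ} (hh : 0 < h) (e : G) (u : G → ℝ) :
    ∑ p, |Δ_[e] (u ^ 2) p| ≤ h * ∑ p, (u p ^ 2 + (Δ_[e] u p / h) ^ 2) := by
  have shift : ∑ p, u (p + e) ^ 2 = ∑ p, u p ^ 2 :=
    Equiv.sum_comp (Equiv.addRight e) fun p ↦ u p ^ 2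
  calc ∑ p, |Δ_[e] (u ^ 2) p|
      ≤ ∑ p, h * ((u (p + e) ^ 2 + u p ^ 2) / 2 + (Δ_[e] u p / h) ^ 2) :=
        sum_le_sum fun p _ ↦ abs_sq_sub_sq_le hh (u (p + e)) (u p)
    _ = h * ∑ p, (u p ^ 2 + (Δ_[e] u p / h) ^ 2) := by
        rw [← mul_sum, sum_add_distrib, sum_add_distrib, ← sum_div, sum_add_distrib, shift,
          add_self_div_two]

end FiniteGroup

section Cycle

variable {m : ℕ} [NeZero m]

lemma dist_le_sum_dist_add_one {X : Type*} [PseudoMetricSpace X] (u : ZMod m → X) (i j : ZMod m) :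
    dist (u i) (u j) ≤ ∑ k, dist (u k) (u (k + 1)) := by
  have walk := dist_le_range_sum_dist (fun t : ℕ ↦ u (i + t)) (j - i).val
  simp only [Nat.cast_zero, add_zero, ZMod.natCast_zmod_val, add_sub_cancel, Nat.cast_add,
    Nat.cast_one, ← add_assoc] at walk
  have inj : Set.InjOn (fun t : ℕ ↦ i + (t : ZMod m)) (range (j - i).val) := by
    refine (add_right_injective i).comp_injOn ((CharP.natCast_injOn_Iio (ZMod m) m).mono ?_)
    simpa using (ZMod.val_lt (j - i)).le
  rw [← sum_image (f := fun k ↦ dist (u k) (u (k + 1))) inj] at walk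
  exact walk.trans (sum_le_univ_sum_of_nonneg fun _ ↦ dist_nonneg)

lemma le_expect_add_sum_abs_fwdDiff (u : ZMod m → ℝ) (i : ZMod m) :
    u i ≤ 𝔼 k, u k + ∑ k, |Δ_[1] u k| := by
  have osc (j : ZMod m) : u i ≤ u j + ∑ k, |Δ_[1] u k| := by
    simp only [← sub_le_iff_le_add', fwdDiff, ← Real.dist_eq, dist_comm (u (_ + 1))]
    exact (le_abs_self _).trans (dist_le_sum_dist_add_one u i j)
  calc u i = 𝔼 _j : ZMod m, u i := (Fintype.expect_const _).symm
    _ ≤ 𝔼 j, (u j + ∑ k, |Δ_[1] u k|) := expect_le_expect fun j _ ↦ osc j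
    _ = 𝔼 k, u k + ∑ k, |Δ_[1] u k| := by rw [expect_add_distrib, Fintype.expect_const]

lemma sq_le_mul_sum_sq_add_fwdDiff_div_sq {h : ℝ} (hh : 0 < h) (u : ZMod m → ℝ) (i : ZMod m) :
    u i ^ 2 ≤ (1 / (m * h) + 1) * (h * ∑ k, (u k ^ 2 + (Δ_[1] u k / h) ^ 2)) := by
  have mean : 𝔼 k, u k ^ 2 ≤ 1 / (m * h) * (h * ∑ k, (u k ^ 2 + (Δ_[1] u k / h) ^ 2)) := by
    calc 𝔼 k, u k ^ 2 = 1 / (m * h) * (h * ∑ k, u k ^ 2) := by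
          rw [Fintype.expect_eq_sum_div_card, ZMod.card]
          field_simp
      _ ≤ _ := by
          gcongr
          exact le_add_of_nonneg_right (sq_nonneg _)
  calc u i ^ 2 ≤ 𝔼 k, u k ^ 2 + ∑ k, |Δ_[1] (u ^ 2) k| := le_expect_add_sum_abs_fwdDiff (u ^ 2) i
    _ ≤ _ := add_le_add mean (sum_abs_fwdDiff_sq_le hh 1 u)
    _ = _ := by ring

end Cycle

section Grid

variable {m n : ℕ}

lemma Dx_eq_fwdDiff (h : ℝ) (φ : Grid m n) : Dx h φ = h⁻¹ • Δ_[(1, 0)] φ := by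
  ext p
  simp [Dx, fwdDiff, Prod.add_def, div_eq_inv_mul]

lemma Dy_eq_fwdDiff (h : ℝ) (φ : Grid m n) : Dy h φ = h⁻¹ • Δ_[(0, 1)] φ := by
  ext p
  simp [Dy, fwdDiff, Prod.add_def, div_eq_inv_mul]

lemma lapH_eq_fwdDiff (h : ℝ) (φ : Grid m n) :
    lapH h φ = -(h⁻¹ ^ 2 •
      (Δ_[-(1, 0)] (Δ_[(1, 0)] φ) + Δ_[-(0, 1)] (Δ_[(0, 1)] φ))) := by
  ext p
  simp only [lapH, sub_eq_add_neg, inv_pow, Prod.neg_mk, neg_zero, smul_add, Pi.neg_apply,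
    Pi.add_apply, Pi.smul_apply, fwdDiff, Prod.add_def, add_zero, neg_add_cancel_right,
    Prod.mk.eta, neg_add_rev, neg_neg, smul_eq_mul]
  ring

lemma Dx_Dy_comm (h : ℝ) (φ : Grid m n) : Dx h (Dy h φ) = Dy h (Dx h φ) := by
  simp only [Dx_eq_fwdDiff, Dy_eq_fwdDiff, fwdDiff_const_smul,
    fwdDiff_comm ((1, 0) : ZMod m × ZMod n)]

lemma sq_le_mul_sum_row [NeZero m] {h : ℝ} (hh : 0 < h) (g : Grid m n)
    (i : ZMod m) (j : ZMod n) :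
    g (i, j) ^ 2 ≤ (1 / (m * h) + 1) * (h * ∑ k, (g (k, j) ^ 2 + Dx h g (k, j) ^ 2)) :=
  sq_le_mul_sum_sq_add_fwdDiff_div_sq hh (fun k ↦ g (k, j)) i

lemma sq_le_mul_sum_column [NeZero n] {h : ℝ} (hh : 0 < h) (g : Grid m n)
    (i : ZMod m) (j : ZMod n) :
    g (i, j) ^ 2 ≤ (1 / (n * h) + 1) * (h * ∑ l, (g (i, l) ^ 2 + Dy h g (i, l) ^ 2)) :=
  sq_le_mul_sum_sq_add_fwdDiff_div_sq hh (fun l ↦ g (i, l)) j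

variable [NeZero m] [NeZero n]

lemma norm2_sq (h : ℝ) (φ : Grid m n) : norm2 h φ ^ 2 = h ^ 2 * ∑ p, φ p ^ 2 :=
  Real.sq_sqrt (by positivity)

lemma gradNorm2_sq (h : ℝ) (φ : Grid m n) :
    gradNorm2 h φ ^ 2 = norm2 h (Dx h φ) ^ 2 + norm2 h (Dy h φ) ^ 2 := by
  rw [gradNorm2, Real.sq_sqrt (by positivity), norm2_sq, norm2_sq, sum_add_distrib, mul_add]

lemma norm4_pow_four (h : ℝ) (φ : Grid m n) : norm4 h φ ^ 4 = h ^ 2 * ∑ p, φ p ^ 4 := by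
  rw [norm4, one_div]
  exact Real.rpow_inv_natCast_pow (by positivity) four_ne_zero

lemma gradNorm4_pow_four (h : ℝ) (φ : Grid m n) :
    gradNorm4 h φ ^ 4 = norm4 h (Dx h φ) ^ 4 + norm4 h (Dy h φ) ^ 4 := by
  rw [norm4_pow_four, norm4_pow_four, ← mul_add, ← sum_add_distrib, gradNorm4, one_div]
  exact Real.rpow_inv_natCast_pow (by positivity) four_ne_zero

lemma gradNorm2_sq_eq_neg_sum_mul_lapH (h : ℝ) (φ : Grid m n) :
    gradNorm2 h φ ^ 2 = -(h ^ 2 * ∑ p, φ p * lapH h φ p) := by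
  have parts : ∑ p, φ p * lapH h φ p =
      -(h⁻¹ ^ 2 * (∑ p, Δ_[(1, 0)] φ p ^ 2 + ∑ p, Δ_[(0, 1)] φ p ^ 2)) := by
    rw [← sum_mul_fwdDiff_neg_fwdDiff, ← sum_mul_fwdDiff_neg_fwdDiff, ← sum_add_distrib, mul_sum,
      ← sum_neg_distrib, lapH_eq_fwdDiff]
    refine sum_congr rfl fun p _ ↦ ?_
    simp only [Pi.neg_apply, Pi.smul_apply, Pi.add_apply, smul_eq_mul]
    ring
  simp only [gradNorm2_sq, norm2_sq, parts, Dx_eq_fwdDiff, Dy_eq_fwdDiff, Pi.smul_apply,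
    smul_eq_mul, mul_pow, ← mul_sum]
  ring

lemma gradNorm2_sq_le_norm2_mul_norm2_lapH (h : ℝ) (φ : Grid m n) :
    gradNorm2 h φ ^ 2 ≤ norm2 h φ * norm2 h (lapH h φ) := by
  have cauchy_schwarz : -∑ p, φ p * lapH h φ p ≤ √(∑ p, φ p ^ 2) * √(∑ p, lapH h φ p ^ 2) := by
    simpa using Real.sum_mul_le_sqrt_mul_sqrt univ (-φ) (lapH h φ)
  calc gradNorm2 h φ ^ 2 = h ^ 2 * -∑ p, φ p * lapH h φ p := by
        rw [gradNorm2_sq_eq_neg_sum_mul_lapH, mul_neg]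
    _ ≤ h ^ 2 * (√(∑ p, φ p ^ 2) * √(∑ p, lapH h φ p ^ 2)) := by gcongr
    _ = norm2 h φ * norm2 h (lapH h φ) := by
        rw [norm2, norm2, Real.sqrt_mul (sq_nonneg h), Real.sqrt_mul (sq_nonneg h),
          mul_mul_mul_comm, Real.mul_self_sqrt (sq_nonneg h)]

lemma norm2_lapH_sq (h : ℝ) (φ : Grid m n) :
    norm2 h (lapH h φ) ^ 2 = norm2 h (Dx h (Dx h φ)) ^ 2 + 2 * norm2 h (Dy h (Dx h φ)) ^ 2
      + norm2 h (Dy h (Dy h φ)) ^ 2 := by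
  simp only [norm2_sq, lapH_eq_fwdDiff, Dx_eq_fwdDiff, Dy_eq_fwdDiff, fwdDiff_const_smul,
    Pi.neg_apply, Pi.smul_apply, Pi.add_apply, smul_eq_mul, neg_sq, mul_pow, ← mul_sum]
  simp only [← sum_fwdDiff_neg_fwdDiff_mul_fwdDiff_neg_fwdDiff, add_sq', sum_add_distrib,
    mul_assoc, ← mul_sum, ← sq]
  ring

/-- The square `‖φ‖₂² + ‖∇ₕφ‖₂² + ‖Δₕφ‖₂²` of the discrete `H²` norm, the quantity through which
the energy controls the `L^∞` norm and the `L⁴` norm of the gradient. -/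
def sobolevNormSq (h : ℝ) (φ : Grid m n) : ℝ :=
  norm2 h φ ^ 2 + gradNorm2 h φ ^ 2 + norm2 h (lapH h φ) ^ 2

lemma sobolevNormSq_nonneg (h : ℝ) (φ : Grid m n) : 0 ≤ sobolevNormSq h φ := by
  unfold sobolevNormSq
  positivity

/-- The constant `(1/Lx + 1)(1/Ly + 1)` of the Sobolev inequalities on a periodic rectangle with
sides `Lx` and `Ly`: one factor for each application of the one-dimensional inequality. -/
def sobolevConst (Lx Ly : ℝ) : ℝ := (1 / Lx + 1) * (1 / Ly + 1)

lemma sobolevConst_pos {Lx Ly : ℝ} (hLx : 0 ≤ Lx) (hLy : 0 ≤ Ly) : 0 < sobolevConst Lx Ly := by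
  unfold sobolevConst
  positivity

lemma sq_le_sobolevConst_mul {h : ℝ} (hh : 0 < h) (φ : Grid m n) (p : ZMod m × ZMod n) :
    φ p ^ 2 ≤ sobolevConst (m * h) (n * h) *
      (norm2 h φ ^ 2 + norm2 h (Dx h φ) ^ 2 + norm2 h (Dy h φ) ^ 2
        + norm2 h (Dy h (Dx h φ)) ^ 2) := by
  calc φ p ^ 2
      ≤ (1 / (m * h) + 1) * (h * ∑ k, (φ (k, p.2) ^ 2 + Dx h φ (k, p.2) ^ 2)) :=
        sq_le_mul_sum_row hh φ p.1 p.2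
    _ ≤ (1 / (m * h) + 1) * (h * ∑ k,
          ((1 / (n * h) + 1) * (h * ∑ l, (φ (k, l) ^ 2 + Dy h φ (k, l) ^ 2))
            + (1 / (n * h) + 1) * (h * ∑ l, (Dx h φ (k, l) ^ 2 + Dy h (Dx h φ) (k, l) ^ 2)))) := by
        gcongr <;> exact sq_le_mul_sum_column hh _ _ _
    _ = _ := by
        simp only [norm2_sq, sobolevConst, Fintype.sum_prod_type, sum_add_distrib, ← mul_sum]
        ring

lemma norm4_pow_four_le {h : ℝ} (hh : 0 < h) (g : Grid m n) :
    norm4 h g ^ 4 ≤ sobolevConst (m * h) (n * h) *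
      ((norm2 h g ^ 2 + norm2 h (Dx h g) ^ 2) * (norm2 h g ^ 2 + norm2 h (Dy h g) ^ 2)) := by
  calc norm4 h g ^ 4 = h ^ 2 * ∑ i, ∑ j, g (i, j) ^ 2 * g (i, j) ^ 2 := by
        simp only [norm4_pow_four, Fintype.sum_prod_type, ← pow_add]
    _ ≤ h ^ 2 * ∑ i, ∑ j,
          ((1 / (n * h) + 1) * (h * ∑ l, (g (i, l) ^ 2 + Dy h g (i, l) ^ 2))) *
          ((1 / (m * h) + 1) * (h * ∑ k, (g (k, j) ^ 2 + Dx h g (k, j) ^ 2))) := by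
        gcongr
        · exact sq_le_mul_sum_column hh g _ _
        · exact sq_le_mul_sum_row hh g _ _
    _ = _ := by
        rw [← sum_mul_sum, ← mul_sum, ← mul_sum, ← mul_sum, ← mul_sum,
          ← Fintype.sum_prod_type (fun p ↦ g p ^ 2 + Dy h g p ^ 2),
          ← Fintype.sum_prod_type_right (fun p ↦ g p ^ 2 + Dx h g p ^ 2)]
        simp only [norm2_sq, sobolevConst, sum_add_distrib]
        ring

lemma normInf_sq_le {h : ℝ} (hh : 0 < h) (φ : Grid m n) :
    normInf φ ^ 2 ≤ sobolevConst (m * h) (n * h) * sobolevNormSq h φ := by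
  obtain ⟨p, hp⟩ : ∃ p, |φ p| = normInf φ := exists_eq_ciSup_of_finite
  have hκ : 0 < sobolevConst (m * h) (n * h) := sobolevConst_pos (by positivity) (by positivity)
  rw [← hp, sq_abs]
  refine (sq_le_sobolevConst_mul hh φ p).trans (mul_le_mul_of_nonneg_left ?_ hκ.le)
  rw [sobolevNormSq, gradNorm2_sq, norm2_lapH_sq]
  linarith [sq_nonneg (norm2 h (Dx h (Dx h φ))), sq_nonneg (norm2 h (Dy h (Dx h φ))),
    sq_nonneg (norm2 h (Dy h (Dy h φ)))]

lemma gradNorm4_pow_four_le {h : ℝ} (hh : 0 < h) (φ : Grid m n) :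
    gradNorm4 h φ ^ 4 ≤ sobolevConst (m * h) (n * h) * sobolevNormSq h φ ^ 2 := by
  have hκ : 0 < sobolevConst (m * h) (n * h) := sobolevConst_pos (by positivity) (by positivity)
  have hx := norm4_pow_four_le hh (Dx h φ)
  have hy := norm4_pow_four_le hh (Dy h φ)
  rw [Dx_Dy_comm] at hy
  rw [gradNorm4_pow_four]
  refine (add_le_add hx hy).trans ?_
  rw [← mul_add]
  refine mul_le_mul_of_nonneg_left (mul_add_mul_le_sq ?_ ?_ ?_ ?_ ?_ ?_) hκ.le
  any_goals positivity
  all_goals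
    rw [sobolevNormSq, gradNorm2_sq, norm2_lapH_sq]
    linarith [sq_nonneg (norm2 h φ), sq_nonneg (norm2 h (Dx h (Dx h φ))),
      sq_nonneg (norm2 h (Dy h (Dx h φ))), sq_nonneg (norm2 h (Dy h (Dy h φ)))]

lemma gradNorm4_sq_le {h : ℝ} (hh : 0 < h) (φ : Grid m n) :
    gradNorm4 h φ ^ 2 ≤ √(sobolevConst (m * h) (n * h)) * sobolevNormSq h φ := by
  rw [← Real.sqrt_sq (sobolevNormSq_nonneg h φ), ← Real.sqrt_mul' _ (sq_nonneg _)]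
  refine Real.le_sqrt_of_sq_le ?_
  rw [← pow_mul]
  exact gradNorm4_pow_four_le hh φ

lemma two_mul_norm2_sq_sub_le_norm4_pow_four (h : ℝ) (φ : Grid m n) :
    2 * norm2 h φ ^ 2 - m * h * (n * h) ≤ norm4 h φ ^ 4 := by
  have pointwise : ∑ p, (2 * φ p ^ 2 - 1) ≤ ∑ p, φ p ^ 4 :=
    sum_le_sum fun p _ ↦ by linarith [sq_nonneg (φ p ^ 2 - 1)]
  calc 2 * norm2 h φ ^ 2 - m * h * (n * h) = h ^ 2 * ∑ p, (2 * φ p ^ 2 - 1) := by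
        simp only [norm2_sq, sum_sub_distrib, ← mul_sum, sum_const, card_univ, Fintype.card_prod,
          ZMod.card, nsmul_eq_mul, Nat.cast_mul, mul_one]
        ring
    _ ≤ h ^ 2 * ∑ p, φ p ^ 4 := by gcongr
    _ = norm4 h φ ^ 4 := (norm4_pow_four h φ).symm

lemma sobolevNormSq_le_energyF {α : ℝ} (hα : 0 ≤ α) (h : ℝ) (φ : Grid m n) :
    α / (2 * (3 + α)) * sobolevNormSq h φ - m * h * (n * h) / 4 ≤ energyF α h φ := by
  have quartic := two_mul_norm2_sq_sub_le_norm4_pow_four h φ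
  have gradient : (2 + α) * gradNorm2 h φ ^ 2 ≤
      (1 + α / 2) ^ 2 * norm2 h φ ^ 2 + norm2 h (lapH h φ) ^ 2 :=
    calc (2 + α) * gradNorm2 h φ ^ 2 ≤ (2 + α) * (norm2 h φ * norm2 h (lapH h φ)) := by
          gcongr
          exact gradNorm2_sq_le_norm2_mul_norm2_lapH h φ
      _ = 2 * ((1 + α / 2) * norm2 h φ) * norm2 h (lapH h φ) := by ring
      _ ≤ _ := by
          rw [← mul_pow]
          exact two_mul_le_add_sq _ _
  have quadratic : α * sobolevNormSq h φ ≤ 2 * (3 + α) *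
      ((1 + α) / 2 * norm2 h φ ^ 2 - gradNorm2 h φ ^ 2 + 1 / 2 * norm2 h (lapH h φ) ^ 2) := by
    rw [sobolevNormSq]
    linarith [sq_nonneg (α * norm2 h φ)]
  rw [← div_le_iff₀' (by positivity), mul_div_right_comm] at quadratic
  rw [energyF]
  linarith

end Grid

/-- There are constants `C₆, C₇ > 0` depending only on `α`, `Lx`, `Ly` (not on `h`, `m`,
`n`) such that `F(φ) ≥ C₆‖φ‖_∞² − Lx·Ly/4` and `F(φ) ≥ C₇‖∇ₕφ‖₄² − Lx·Ly/4`
for every periodic grid function `φ`. -/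
theorem discrete_energy_Linfty_W14_coercive (α Lx Ly : ℝ)
    (hα : 0 < α) (hLx : 0 < Lx) (hLy : 0 < Ly) :
    ∃ C₆ > (0 : ℝ), ∃ C₇ > (0 : ℝ),
      ∀ (m n : ℕ) [NeZero m] [NeZero n] (h : ℝ), 0 < h →
        (m : ℝ) * h = Lx → (n : ℝ) * h = Ly →
        ∀ φ : Grid m n,
          energyF α h φ ≥ C₆ * normInf φ ^ 2 - Lx * Ly / 4 ∧
          energyF α h φ ≥ C₇ * gradNorm4 h φ ^ 2 - Lx * Ly / 4 := by
  have hκ := sobolevConst_pos hLx.le hLy.le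
  have hc : 0 < α / (2 * (3 + α)) := by positivity
  refine ⟨α / (2 * (3 + α)) / sobolevConst Lx Ly, div_pos hc hκ,
    α / (2 * (3 + α)) / √(sobolevConst Lx Ly), div_pos hc (Real.sqrt_pos.2 hκ), ?_⟩
  rintro m n _ _ h hh rfl rfl φ
  have coercive := sobolevNormSq_le_energyF hα.le h φ
  have transfer {X K : ℝ} (hK : 0 < K) (hX : X ≤ K * sobolevNormSq h φ) :
      α / (2 * (3 + α)) / K * X ≤ α / (2 * (3 + α)) * sobolevNormSq h φ := by
    rw [div_mul_eq_mul_div, mul_div_assoc]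
    gcongr
    exact (div_le_iff₀' hK).2 hX
  constructor
  · linarith [transfer hκ (normInf_sq_le hh φ)]
  · linarith [transfer (Real.sqrt_pos.2 hκ) (gradNorm4_sq_le hh φ)]
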